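/- Let S² be the unit sphere in ℝ³. Let X be the subspace of S² × S² × S² consisting of triples (x, y, z) of pairwise distinct points, and let E ⊆ X be the subspace of those triples which in addition satisfy dist(x,y) = dist(y,z) = dist(z,x) (equilateral triangles). Then the inclusion map E → X is a homotopy equivalence. -/

import Mathlib

/-- The unit sphere `S²` in `ℝ³`. -/
abbrev Sph : Type := Metric.sphere (0 : EuclideanSpace ℝ (Fin 3)) 1

/-- The space `X` of triples of pairwise distinct points of `S²`. -/
def distinctTriples : Set (Sph × Sph × Sph) :=
  {p | p.1 ≠ p.2.1 ∧ p.1 ≠ p.2.2 ∧ p.2.1 ≠ p.2.2}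

/-- The subspace `E ⊆ X` of equilateral triples. -/
def equilateralTriples : Set (Sph × Sph × Sph) :=
  {p | (p.1 ≠ p.2.1 ∧ p.1 ≠ p.2.2 ∧ p.2.1 ≠ p.2.2) ∧
       dist p.1 p.2.1 = dist p.2.1 p.2.2 ∧ dist p.2.1 p.2.2 = dist p.2.2 p.1}

lemma equilateral_subset_distinct : equilateralTriples ⊆ distinctTriples :=
  fun _ hp => hp.1

/-!
The inversion centered at `x` straightens the circle through `x`, `y`, `z` into the line through the
images of `y` and `z`, maps the rest of the sphere into an affine subspace missing `x`, and sends
equilateral triangles with vertex `x` to equilateral triangles with vertex `x`. In the inverted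
picture there is exactly one equilateral triangle with apex `x` and base on that line, so `y` and
`z` slide affinely along the line to its base vertices, keeping their order and hence never meeting.
Undoing the inversion, `y` and `z` slide along the circle to the vertices of the inscribed
equilateral triangle with vertex `x`, and triples that are equilateral already do not move.
-/

open AffineMap AffineSubspace EuclideanGeometry Metric unitInterval
open scoped RealInnerProductSpace

section Triples

variable {α : Type*}

/-- The triples of pairwise distinct points of `α`; for `α = S²` this is the space `X`. -/
def pairwiseDistinctTriples (α : Type*) : Set (α × α × α) :=
  {p | p.1 ≠ p.2.1 ∧ p.1 ≠ p.2.2 ∧ p.2.1 ≠ p.2.2}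

/-- The property of three points of having equal mutual distances. Three equal points satisfy it:
nondegeneracy is a separate condition. -/
def IsEquilateral [PseudoMetricSpace α] (x y z : α) : Prop :=
  dist x y = dist y z ∧ dist y z = dist z x

/-- The nondegenerate equilateral triples of points of `α`; for `α = S²` this is the space `E`. -/
def nondegEquilateralTriples (α : Type*) [PseudoMetricSpace α] : Set (α × α × α) :=
  {p | p ∈ pairwiseDistinctTriples α ∧ IsEquilateral p.1 p.2.1 p.2.2}

lemma nondegEquilateralTriples_subset [PseudoMetricSpace α] :
    nondegEquilateralTriples α ⊆ pairwiseDistinctTriples α :=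
  fun _ hp => hp.1

lemma IsEquilateral.swap [PseudoMetricSpace α] {x y z : α} (h : IsEquilateral x y z) :
    IsEquilateral x z y := by
  refine ⟨?_, ?_⟩
  · rw [dist_comm x z, dist_comm z y, h.2]
  · rw [dist_comm z y, dist_comm y x, h.1]

end Triples

section Euclidean

variable {V P : Type*} [NormedAddCommGroup V] [InnerProductSpace ℝ V] [MetricSpace P]
  [NormedAddTorsor V P]

section Line

variable {a b c : P}

/-- The foot of the perpendicular from `c` to the line `ab`, as a point of the ambient space. -/
noncomputable def perpFoot (c a b : P) : P :=
  orthogonalProjection line[ℝ, a, b] c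

lemma perpFoot_comm (c a b : P) : perpFoot c a b = perpFoot c b a := by
  simp only [perpFoot, Set.pair_comm a b]

lemma perpFoot_mem (c a b : P) : perpFoot c a b ∈ line[ℝ, a, b] :=
  orthogonalProjection_mem c

lemma perpFoot_eq_iff {q : P} :
    perpFoot c a b = q ↔ q ∈ line[ℝ, a, b] ∧ ⟪b -ᵥ a, c -ᵥ q⟫ = 0 := by
  rw [perpFoot, coe_orthogonalProjection_eq_iff_mem, direction_affineSpan, vectorSpan_pair_rev,
    Submodule.mem_orthogonal_singleton_iff_inner_right]

lemma perpFoot_eq_lineMap (c a b : P) :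
    perpFoot c a b = lineMap a b (⟪b -ᵥ a, c -ᵥ a⟫ / ‖b -ᵥ a‖ ^ 2) := by
  refine perpFoot_eq_iff.2 ⟨lineMap_mem_affineSpan_pair _ _ _, ?_⟩
  rcases eq_or_ne a b with rfl | hab
  · simp
  · have hab' : ‖b -ᵥ a‖ ≠ 0 := norm_ne_zero_iff.2 (vsub_ne_zero.2 hab.symm)
    rw [lineMap_apply, vsub_vadd_eq_vsub_sub, inner_sub_right, inner_smul_right,
      real_inner_self_eq_norm_sq, div_mul_cancel₀ _ (pow_ne_zero 2 hab'), sub_self]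

lemma perpFoot_eq_midpoint (h : dist c a = dist c b) : perpFoot c a b = midpoint ℝ a b :=
  perpFoot_eq_iff.2 ⟨lineMap_mem_affineSpan_pair _ _ _, by
    rw [real_inner_comm, ← mem_perpBisector_iff_inner_eq_zero, mem_perpBisector_iff_dist_eq, h]⟩

/-- The vertex on the side of `a` of the equilateral triangle with apex `c` and base on the
line `ab`; the other base vertex is `baseVertex c b a`. -/
noncomputable def baseVertex (c a b : P) : P :=
  (dist c (perpFoot c a b) / (√3 * dist a b)) • (a -ᵥ b) +ᵥ perpFoot c a b

lemma baseVertex_vsub_perpFoot (c a b : P) :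
    baseVertex c a b -ᵥ perpFoot c a b =
      (dist c (perpFoot c a b) / (√3 * dist a b)) • (a -ᵥ b) :=
  vadd_vsub _ _

lemma baseVertex_vsub_baseVertex (c a b : P) :
    baseVertex c a b -ᵥ baseVertex c b a =
      (2 * (dist c (perpFoot c a b) / (√3 * dist a b))) • (a -ᵥ b) := by
  rw [baseVertex, baseVertex, perpFoot_comm c b a, dist_comm b a, vadd_vsub_vadd_cancel_right,
    ← neg_vsub_eq_vsub_rev a b]
  module

lemma baseVertex_mem (c a b : P) : baseVertex c a b ∈ line[ℝ, a, b] :=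
  vadd_mem_of_mem_direction
    (Submodule.smul_mem _ _ (vsub_mem_direction (left_mem_affineSpan_pair _ _ _)
      (right_mem_affineSpan_pair _ _ _))) (perpFoot_mem c a b)

lemma dist_baseVertex_perpFoot (c : P) (hab : a ≠ b) :
    dist (baseVertex c a b) (perpFoot c a b) = dist c (perpFoot c a b) / √3 := by
  have hd : 0 < dist a b := dist_pos.2 hab
  rw [dist_eq_norm_vsub V, baseVertex_vsub_perpFoot, norm_smul, ← dist_eq_norm_vsub V,
    Real.norm_of_nonneg (by positivity)]
  field_simp

lemma dist_baseVertex_apex (c : P) (hab : a ≠ b) :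
    dist (baseVertex c a b) c = 2 * (dist c (perpFoot c a b) / √3) := by
  have pythagoras : dist (baseVertex c a b) c * dist (baseVertex c a b) c =
      dist (baseVertex c a b) (perpFoot c a b) * dist (baseVertex c a b) (perpFoot c a b) +
        dist c (perpFoot c a b) * dist c (perpFoot c a b) :=
    dist_sq_eq_dist_orthogonalProjection_sq_add_dist_orthogonalProjection_sq c
      (baseVertex_mem c a b)
  rw [dist_baseVertex_perpFoot c hab] at pythagoras
  rw [← mul_self_inj_of_nonneg dist_nonneg (by positivity), pythagoras]
  field_simp
  rw [Real.sq_sqrt (by norm_num)]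
  norm_num

lemma dist_baseVertex_baseVertex (c : P) (hab : a ≠ b) :
    dist (baseVertex c a b) (baseVertex c b a) = 2 * (dist c (perpFoot c a b) / √3) := by
  have hd : 0 < dist a b := dist_pos.2 hab
  rw [dist_eq_norm_vsub V, baseVertex_vsub_baseVertex, norm_smul, ← dist_eq_norm_vsub V,
    Real.norm_of_nonneg (by positivity)]
  field_simp

lemma isEquilateral_baseVertex (c : P) (hab : a ≠ b) :
    IsEquilateral c (baseVertex c a b) (baseVertex c b a) := by
  refine ⟨?_, ?_⟩
  · rw [dist_comm, dist_baseVertex_apex c hab, dist_baseVertex_baseVertex c hab]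
  · rw [dist_baseVertex_baseVertex c hab, dist_baseVertex_apex c hab.symm, perpFoot_comm]

lemma baseVertex_eq_self (hab : a ≠ b) (h : IsEquilateral c a b) : baseVertex c a b = a := by
  have hcb : dist c b = dist a b := by rw [dist_comm c b, h.2]
  have hfoot : perpFoot c a b = midpoint ℝ a b := perpFoot_eq_midpoint (h.1.trans hcb.symm)
  have altitude : dist c (midpoint ℝ a b) = √3 / 2 * dist a b := by
    rw [← sq_eq_sq₀ dist_nonneg (by positivity), mul_pow, div_pow, Real.sq_sqrt (by norm_num)]
    have apollonius := dist_sq_add_dist_sq_eq_two_mul_dist_midpoint_sq_add_half_dist_sq c a b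
    rw [h.1, hcb] at apollonius
    linarith
  have hcoef : √3 / 2 * dist a b / (√3 * dist a b) = 2⁻¹ := by
    have hd : dist a b ≠ 0 := dist_ne_zero.2 hab
    field_simp
  rw [baseVertex, hfoot, altitude, hcoef, ← invOf_eq_inv, ← left_vsub_midpoint, vsub_vadd]

/-- The straight-line motion of `a` along the line `ab`, from `baseVertex c a b` at time `0` to `a`
at time `1`. -/
noncomputable def slideOnLine (s : ℝ) (c a b : P) : P :=
  lineMap (baseVertex c a b) a s

lemma slideOnLine_mem {S : AffineSubspace ℝ P} (s : ℝ) (c : P) (ha : a ∈ S) (hb : b ∈ S) :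
    slideOnLine s c a b ∈ S :=
  lineMap_mem s (affineSpan_pair_le_of_mem_of_mem ha hb (baseVertex_mem c a b)) ha

lemma slideOnLine_vsub_slideOnLine (s : ℝ) (c a b : P) :
    slideOnLine s c a b -ᵥ slideOnLine s c b a =
      lineMap (2 * (dist c (perpFoot c a b) / (√3 * dist a b))) 1 s • (a -ᵥ b) := by
  rw [slideOnLine, slideOnLine, lineMap_vsub_lineMap, baseVertex_vsub_baseVertex,
    lineMap_apply_module, lineMap_apply_module]
  module

lemma slideOnLine_ne_slideOnLine {s : ℝ} (hs : s ∈ I) (hab : a ≠ b) (hc : c ∉ line[ℝ, a, b]) :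
    slideOnLine s c a b ≠ slideOnLine s c b a := by
  have hd : 0 < dist a b := dist_pos.2 hab
  have hfoot : 0 < dist c (perpFoot c a b) :=
    dist_pos.2 fun h => hc (h ▸ perpFoot_mem c a b)
  have hpos : (lineMap (2 * (dist c (perpFoot c a b) / (√3 * dist a b))) 1 s : ℝ) ∈ Set.Ioi 0 :=
    (convex_Ioi 0).lineMap_mem (Set.mem_Ioi.2 (by positivity)) (Set.mem_Ioi.2 one_pos) hs
  rw [← vsub_ne_zero (G := V), slideOnLine_vsub_slideOnLine]
  exact smul_ne_zero (Set.mem_Ioi.1 hpos).ne' (vsub_ne_zero.2 hab)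

lemma slideOnLine_one (c a b : P) : slideOnLine 1 c a b = a :=
  lineMap_apply_one _ _

lemma isEquilateral_slideOnLine_zero (c : P) (hab : a ≠ b) :
    IsEquilateral c (slideOnLine 0 c a b) (slideOnLine 0 c b a) := by
  simpa only [slideOnLine, lineMap_apply_zero] using isEquilateral_baseVertex c hab

lemma slideOnLine_eq_self (s : ℝ) (hab : a ≠ b) (h : IsEquilateral c a b) :
    slideOnLine s c a b = a := by
  rw [slideOnLine, baseVertex_eq_self hab h, lineMap_same_apply]

end Line

section Circle

variable {o x y z : P} {r : ℝ}

lemma IsEquilateral.inversion (h : IsEquilateral x y z) (hy : y ≠ x) (R : ℝ) :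
    IsEquilateral x (inversion x R y) (inversion x R z) := by
  have hxz : dist x z = dist x y := by rw [dist_comm x z, ← h.2, ← h.1]
  have hd : dist x y ≠ 0 := dist_ne_zero.2 hy.symm
  have hz : z ≠ x := (dist_ne_zero.1 (hxz ▸ hd)).symm
  rw [IsEquilateral, dist_inversion_inversion hy hz, dist_center_inversion, dist_inversion_center,
    dist_comm y x, dist_comm z x, hxz, ← h.1]
  constructor <;> field_simp

lemma exists_affineSubspace_inversion_mem_iff (hx : x ∈ sphere o r) :
    ∃ S : AffineSubspace ℝ P, x ∉ S ∧ ∀ w ≠ x, inversion x 1 w ∈ S ↔ w ∈ sphere o r := by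
  rcases eq_or_ne o x with rfl | hox
  · refine ⟨⊥, notMem_bot ℝ V o, fun w hw => iff_of_false (notMem_bot ℝ V _) fun hw' => hw ?_⟩
    rw [← dist_eq_zero, Metric.mem_sphere.1 hw', ← Metric.mem_sphere.1 hx, dist_self]
  · refine ⟨perpBisector x (inversion x 1 o), ?_, fun w hw => ?_⟩
    · rw [left_mem_perpBisector, center_eq_inversion one_ne_zero]
      exact hox
    · rw [inversion_mem_perpBisector_inversion_iff one_ne_zero hw hox, Metric.mem_sphere,
        ← Metric.mem_sphere.1 hx, dist_comm o x]

/-- The motion of `y` along the circle through `x`, `y`, `z` that corresponds to `slideOnLine` when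
an inversion centered at `x` straightens the circle. It starts from a vertex of an inscribed
equilateral triangle with vertex `x`, whose third vertex is `slideOnCircle 0 x z y`. -/
noncomputable def slideOnCircle (s : ℝ) (x y z : P) : P :=
  inversion x 1 (slideOnLine s x (inversion x 1 y) (inversion x 1 z))

lemma slideOnCircle_one (x y z : P) : slideOnCircle 1 x y z = y := by
  rw [slideOnCircle, slideOnLine_one, inversion_inversion x one_ne_zero]

lemma slideOnLine_inversion_ne_center (hx : x ∈ sphere o r) (hy : y ∈ sphere o r)
    (hz : z ∈ sphere o r) (hyx : y ≠ x) (hzx : z ≠ x) (s : ℝ) :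
    slideOnLine s x (inversion x 1 y) (inversion x 1 z) ≠ x := by
  obtain ⟨S, hxS, hS⟩ := exists_affineSubspace_inversion_mem_iff hx
  exact ne_of_mem_of_not_mem (slideOnLine_mem s x ((hS y hyx).2 hy) ((hS z hzx).2 hz)) hxS

lemma slideOnCircle_ne (hx : x ∈ sphere o r) (hy : y ∈ sphere o r) (hz : z ∈ sphere o r)
    (hyx : y ≠ x) (hzx : z ≠ x) (s : ℝ) : slideOnCircle s x y z ≠ x :=
  (inversion_eq_center one_ne_zero).not.2 (slideOnLine_inversion_ne_center hx hy hz hyx hzx s)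

lemma slideOnCircle_mem_sphere (hx : x ∈ sphere o r) (hy : y ∈ sphere o r) (hz : z ∈ sphere o r)
    (hyx : y ≠ x) (hzx : z ≠ x) (s : ℝ) : slideOnCircle s x y z ∈ sphere o r := by
  obtain ⟨S, -, hS⟩ := exists_affineSubspace_inversion_mem_iff hx
  rw [← hS _ (slideOnCircle_ne hx hy hz hyx hzx s), slideOnCircle,
    inversion_inversion x one_ne_zero]
  exact slideOnLine_mem s x ((hS y hyx).2 hy) ((hS z hzx).2 hz)

lemma slideOnCircle_ne_slideOnCircle {s : ℝ} (hs : s ∈ I) (hx : x ∈ sphere o r)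
    (hy : y ∈ sphere o r) (hz : z ∈ sphere o r) (hyx : y ≠ x) (hzx : z ≠ x) (hyz : y ≠ z) :
    slideOnCircle s x y z ≠ slideOnCircle s x z y := by
  obtain ⟨S, hxS, hS⟩ := exists_affineSubspace_inversion_mem_iff hx
  have line_le : line[ℝ, inversion x 1 y, inversion x 1 z] ≤ S :=
    affineSpan_pair_le_of_mem_of_mem ((hS y hyx).2 hy) ((hS z hzx).2 hz)
  have inversion_inj := inversion_injective x (one_ne_zero (α := ℝ))
  exact inversion_inj.ne (slideOnLine_ne_slideOnLine hs (inversion_inj.ne hyz) (hxS <| line_le ·))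

lemma isEquilateral_slideOnCircle_zero (hx : x ∈ sphere o r) (hy : y ∈ sphere o r)
    (hz : z ∈ sphere o r) (hyx : y ≠ x) (hzx : z ≠ x) (hyz : y ≠ z) :
    IsEquilateral x (slideOnCircle 0 x y z) (slideOnCircle 0 x z y) :=
  (isEquilateral_slideOnLine_zero x ((inversion_injective x one_ne_zero).ne hyz)).inversion
    (slideOnLine_inversion_ne_center hx hy hz hyx hzx 0) 1

lemma slideOnCircle_eq_self (s : ℝ) (hyx : y ≠ x) (h : IsEquilateral x y z) :
    slideOnCircle s x y z = y := by
  have hyz : y ≠ z := dist_ne_zero.1 (h.1 ▸ dist_ne_zero.2 hyx.symm)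
  rw [slideOnCircle, slideOnLine_eq_self s ((inversion_injective x one_ne_zero).ne hyz)
    (h.inversion hyx 1), inversion_inversion x one_ne_zero]

end Circle

section Continuity

variable {X : Type*} [TopologicalSpace X] {s : X → ℝ} {f g h : X → P}

lemma continuous_perpFoot (hf : Continuous f) (hg : Continuous g) (hh : Continuous h)
    (hgh : ∀ t, g t ≠ h t) : Continuous fun t => perpFoot (f t) (g t) (h t) := by
  have hd : ∀ t, ‖h t -ᵥ g t‖ ^ 2 ≠ 0 := fun t =>
    pow_ne_zero 2 (norm_ne_zero_iff.2 (vsub_ne_zero.2 (hgh t).symm))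
  simp only [perpFoot_eq_lineMap]
  fun_prop (disch := assumption)

lemma continuous_baseVertex (hf : Continuous f) (hg : Continuous g) (hh : Continuous h)
    (hgh : ∀ t, g t ≠ h t) : Continuous fun t => baseVertex (f t) (g t) (h t) := by
  have hfoot := continuous_perpFoot hf hg hh hgh
  have hd : ∀ t, √3 * dist (g t) (h t) ≠ 0 := fun t =>
    mul_ne_zero (by norm_num) (dist_ne_zero.2 (hgh t))
  unfold baseVertex
  fun_prop (disch := assumption)

lemma continuous_slideOnLine (hs : Continuous s) (hf : Continuous f) (hg : Continuous g)
    (hh : Continuous h) (hgh : ∀ t, g t ≠ h t) :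
    Continuous fun t => slideOnLine (s t) (f t) (g t) (h t) :=
  (continuous_baseVertex hf hg hh hgh).lineMap hg hs

lemma continuous_slideOnCircle {o : P} {r : ℝ} (hs : Continuous s) (hf : Continuous f)
    (hg : Continuous g) (hh : Continuous h) (hfo : ∀ t, f t ∈ sphere o r)
    (hgo : ∀ t, g t ∈ sphere o r) (hho : ∀ t, h t ∈ sphere o r) (hgf : ∀ t, g t ≠ f t)
    (hhf : ∀ t, h t ≠ f t) (hgh : ∀ t, g t ≠ h t) :
    Continuous fun t => slideOnCircle (s t) (f t) (g t) (h t) := by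
  have hg' : Continuous fun t => inversion (f t) 1 (g t) := hf.inversion continuous_const hg hgf
  have hh' : Continuous fun t => inversion (f t) 1 (h t) := hf.inversion continuous_const hh hhf
  refine hf.inversion continuous_const (continuous_slideOnLine hs hf hg' hh' fun t => ?_) fun t =>
    slideOnLine_inversion_ne_center (hfo t) (hgo t) (hho t) (hgf t) (hhf t) (s t)
  exact (inversion_injective (f t) one_ne_zero).ne (hgh t)

end Continuity

section Sphere

variable {o : P} {r : ℝ}

/-- The motion of the triples of distinct points of a sphere that slides the last two points along
the circle through all three. -/
noncomputable def slideTriple (s : I) (p : pairwiseDistinctTriples (sphere o r)) :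
    pairwiseDistinctTriples (sphere o r) :=
  have hyx := Subtype.coe_ne_coe.2 p.2.1.symm
  have hzx := Subtype.coe_ne_coe.2 p.2.2.1.symm
  have hyz := Subtype.coe_ne_coe.2 p.2.2.2
  have hx := p.1.1.2
  have hy := p.1.2.1.2
  have hz := p.1.2.2.2
  ⟨(p.1.1,
      ⟨slideOnCircle s p.1.1 p.1.2.1 p.1.2.2, slideOnCircle_mem_sphere hx hy hz hyx hzx s⟩,
      ⟨slideOnCircle s p.1.1 p.1.2.2 p.1.2.1, slideOnCircle_mem_sphere hx hz hy hzx hyx s⟩),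
    Subtype.coe_ne_coe.1 (slideOnCircle_ne hx hy hz hyx hzx s).symm,
    Subtype.coe_ne_coe.1 (slideOnCircle_ne hx hz hy hzx hyx s).symm,
    Subtype.coe_ne_coe.1 (slideOnCircle_ne_slideOnCircle s.2 hx hy hz hyx hzx hyz)⟩

lemma continuous_slideTriple :
    Continuous fun q : I × pairwiseDistinctTriples (sphere o r) => slideTriple q.1 q.2 := by
  have hyx (q : I × pairwiseDistinctTriples (sphere o r)) :=
    Subtype.coe_ne_coe.2 q.2.2.1.symm
  have hzx (q : I × pairwiseDistinctTriples (sphere o r)) :=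
    Subtype.coe_ne_coe.2 q.2.2.2.1.symm
  have hyz (q : I × pairwiseDistinctTriples (sphere o r)) :=
    Subtype.coe_ne_coe.2 q.2.2.2.2
  refine .subtype_mk (.prodMk (by fun_prop) (.prodMk (.subtype_mk ?_ _) (.subtype_mk ?_ _))) _
  · exact continuous_slideOnCircle (by fun_prop) (by fun_prop) (by fun_prop) (by fun_prop)
      (fun q => q.2.1.1.2) (fun q => q.2.1.2.1.2) (fun q => q.2.1.2.2.2) hyx hzx hyz
  · exact continuous_slideOnCircle (by fun_prop) (by fun_prop) (by fun_prop) (by fun_prop)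
      (fun q => q.2.1.1.2) (fun q => q.2.1.2.2.2) (fun q => q.2.1.2.1.2) hzx hyx
      fun q => (hyz q).symm

lemma slideTriple_one (p : pairwiseDistinctTriples (sphere o r)) : slideTriple 1 p = p :=
  Subtype.ext <| Prod.ext rfl <| Prod.ext
    (Subtype.ext (slideOnCircle_one _ _ _)) (Subtype.ext (slideOnCircle_one _ _ _))

lemma slideTriple_zero_mem (p : pairwiseDistinctTriples (sphere o r)) :
    (slideTriple 0 p).1 ∈ nondegEquilateralTriples (sphere o r) :=
  ⟨(slideTriple 0 p).2, isEquilateral_slideOnCircle_zero p.1.1.2 p.1.2.1.2 p.1.2.2.2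
    (Subtype.coe_ne_coe.2 p.2.1.symm) (Subtype.coe_ne_coe.2 p.2.2.1.symm)
    (Subtype.coe_ne_coe.2 p.2.2.2)⟩

lemma slideTriple_eq_self (s : I) {p : pairwiseDistinctTriples (sphere o r)}
    (hp : p.1 ∈ nondegEquilateralTriples (sphere o r)) : slideTriple s p = p := by
  have hyx := Subtype.coe_ne_coe.2 p.2.1.symm
  have hzx := Subtype.coe_ne_coe.2 p.2.2.1.symm
  have hequi : IsEquilateral (p.1.1 : P) p.1.2.1 p.1.2.2 := hp.2
  exact Subtype.ext <| Prod.ext rfl <| Prod.ext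
    (Subtype.ext (slideOnCircle_eq_self s hyx hequi))
    (Subtype.ext (slideOnCircle_eq_self s hzx hequi.swap))

end Sphere

end Euclidean

theorem stmt17_general {V P : Type*} [NormedAddCommGroup V] [InnerProductSpace ℝ V]
    [MetricSpace P] [NormedAddTorsor V P] (o : P) (r : ℝ) :
    ∃ ret : C(pairwiseDistinctTriples (sphere o r), nondegEquilateralTriples (sphere o r)),
      ((ContinuousMap.inclusion nondegEquilateralTriples_subset).comp ret).HomotopicRel
        (ContinuousMap.id _) {p | p.1 ∈ nondegEquilateralTriples (sphere o r)} ∧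
      ret.comp (ContinuousMap.inclusion nondegEquilateralTriples_subset) =
        ContinuousMap.id _ := by
  let ret : C(pairwiseDistinctTriples (sphere o r), nondegEquilateralTriples (sphere o r)) :=
    ⟨fun p => ⟨slideTriple 0 p, slideTriple_zero_mem p⟩, by
      have := continuous_slideTriple (o := o) (r := r)
      fun_prop⟩
  let slide : ((ContinuousMap.inclusion nondegEquilateralTriples_subset).comp ret).Homotopy
      (ContinuousMap.id _) :=
    { toFun := fun q => slideTriple q.1 q.2
      continuous_toFun := continuous_slideTriple
      map_zero_left := fun _ => rfl
      map_one_left := slideTriple_one }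
  refine ⟨ret, ⟨slide, fun s p hp => ?_⟩, ?_⟩
  · exact (slideTriple_eq_self s hp).trans (slideTriple_eq_self 0 hp).symm
  · exact ContinuousMap.ext fun p =>
      Set.inclusion_injective nondegEquilateralTriples_subset (slideTriple_eq_self 0 p.2)

/-- The inclusion `E → X` of the space of equilateral triples of points of `S²` into
the space of pairwise distinct triples is a homotopy equivalence. -/
theorem stmt17 :
    ∃ r : C(distinctTriples, equilateralTriples),
      ((⟨Set.inclusion equilateral_subset_distinct,
          continuous_inclusion equilateral_subset_distinct⟩ :
            C(equilateralTriples, distinctTriples)).comp r).Homotopic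
        (ContinuousMap.id distinctTriples) ∧
      (r.comp (⟨Set.inclusion equilateral_subset_distinct,
          continuous_inclusion equilateral_subset_distinct⟩ :
            C(equilateralTriples, distinctTriples))).Homotopic
        (ContinuousMap.id equilateralTriples) := by
  obtain ⟨r, hX, hE⟩ := stmt17_general (0 : EuclideanSpace ℝ (Fin 3)) 1
  exact ⟨r, hX.homotopic, hE ▸ .refl _⟩
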